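/- Let s = x₅(x₂⁴ + x₃⁴) + x₁x₄ ∈ ℂ[x₁, …, x₅]. If a = (a₁, …, a₅) ∈ ℂ⁵ is a point at which all five partial derivatives ∂s/∂xᵢ vanish, then either a₁ = a₂ = a₃ = a₄ = 0, or a₄ = a₅ = 0; moreover s(a) = 0 at any such point. -/

import Mathlib

open MvPolynomial

/-!
For `s = y f + u v` with `f` free of `u`, `v`, `y`, the derivatives in `u`, `v`, `y` are `v`, `u`,
`f`, so `u`, `v` and `f` vanish at a critical point, and hence so does `s`. The remaining
derivatives are `y ∂f/∂xᵢ`, so over a domain either `y = 0` or the point is also critical for `f`;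
for `f = ∑ xᵢⁿ` with `n ≠ 0` in the domain, the latter forces all `xᵢ = 0`.
-/

section CriticalPoints

variable {R σ : Type*} [CommSemiring R]

/-- Critical points of a polynomial in the algebraic sense: all formal partial derivatives vanish.
Unlike for a singular point of the zero locus, the value of `p` at `a` is left free. -/
def IsCriticalPoint (p : MvPolynomial σ R) (a : σ → R) : Prop :=
  ∀ i, eval a (pderiv i p) = 0

theorem isCriticalPoint_X_mul_add_X_mul_X_iff {u v y : σ} {f : MvPolynomial σ R} {a : σ → R}
    (huv : u ≠ v) (huy : u ≠ y) (hvy : v ≠ y)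
    (hfu : pderiv u f = 0) (hfv : pderiv v f = 0) (hfy : pderiv y f = 0) :
    IsCriticalPoint (X y * f + X u * X v) a ↔
      a u = 0 ∧ a v = 0 ∧ eval a f = 0 ∧ ∀ i, a y * eval a (pderiv i f) = 0 := by
  constructor
  · intro h
    have hv : a v = 0 := by
      simpa [hfu, pderiv_X_of_ne huv.symm, pderiv_X_of_ne huy.symm] using h u
    have hu : a u = 0 := by
      simpa [hfv, pderiv_X_of_ne huv, pderiv_X_of_ne hvy.symm] using h v
    have hf : eval a f = 0 := by
      simpa [hfy, pderiv_X_of_ne huy, pderiv_X_of_ne hvy] using h y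
    exact ⟨hu, hv, hf, fun i ↦ by simpa [hu, hv, hf] using h i⟩
  · rintro ⟨hu, hv, hf, hdf⟩ i
    simp [hu, hv, hf, hdf]

theorem pderiv_sum_X_pow_of_mem {t : Finset σ} {i : σ} (hi : i ∈ t) (n : ℕ) :
    pderiv i (∑ j ∈ t, (X j : MvPolynomial σ R) ^ n) = (n : MvPolynomial σ R) * X i ^ (n - 1) := by
  rw [map_sum, Finset.sum_eq_single_of_mem i hi fun j _ hj ↦ by simp [pderiv_X_of_ne hj]]
  simp

theorem pderiv_sum_X_pow_of_notMem {t : Finset σ} {i : σ} (hi : i ∉ t) (n : ℕ) :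
    pderiv i (∑ j ∈ t, (X j : MvPolynomial σ R) ^ n) = 0 := by
  rw [map_sum]
  exact Finset.sum_eq_zero fun j hj ↦ by
    simp [pderiv_X_of_ne (ne_of_mem_of_not_mem hj hi)]

theorem singular_locus_of_section_general [NoZeroDivisors R] {n : ℕ} (hn : (n : R) ≠ 0)
    {u v y : σ} {t : Finset σ} (huv : u ≠ v) (huy : u ≠ y) (hvy : v ≠ y)
    (hut : u ∉ t) (hvt : v ∉ t) (hyt : y ∉ t) {a : σ → R}
    (h : IsCriticalPoint (X y * (∑ j ∈ t, X j ^ n) + X u * X v) a) :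
    ((a u = 0 ∧ (∀ i ∈ t, a i = 0) ∧ a v = 0) ∨ (a v = 0 ∧ a y = 0)) ∧
      eval a (X y * (∑ j ∈ t, X j ^ n) + X u * X v) = 0 := by
  obtain ⟨hu, hv, hf, hdf⟩ := (isCriticalPoint_X_mul_add_X_mul_X_iff huv huy hvy
    (pderiv_sum_X_pow_of_notMem hut n) (pderiv_sum_X_pow_of_notMem hvt n)
    (pderiv_sum_X_pow_of_notMem hyt n)).1 h
  have hs : eval a (X y * (∑ j ∈ t, X j ^ n) + X u * X v) = 0 := by
    rw [map_add, map_mul, hf, mul_zero, map_mul, eval_X, hu, zero_mul, add_zero]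
  refine ⟨?_, hs⟩
  rcases eq_or_ne (a y) 0 with hy | hy
  · exact Or.inr ⟨hv, hy⟩
  · refine Or.inl ⟨hu, fun i hi ↦ ?_, hv⟩
    have hpow : (n : R) * a i ^ (n - 1) = 0 := by
      have hdi := (mul_eq_zero.1 (hdf i)).resolve_left hy
      rwa [pderiv_sum_X_pow_of_mem hi, map_mul, map_natCast, map_pow, eval_X] at hdi
    exact eq_zero_of_pow_eq_zero ((mul_eq_zero.1 hpow).resolve_left hn)

end CriticalPoints

/-- Every point of `ℂ⁵` at which all five partial derivatives of
`s = x₅(x₂⁴ + x₃⁴) + x₁x₄` vanish satisfies `x₁ = x₂ = x₃ = x₄ = 0` or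
`x₄ = x₅ = 0`, and `s` itself vanishes there. (Variables are indexed `0,…,4` for
`x₁,…,x₅`.) -/
theorem singular_locus_of_section (a : Fin 5 → ℂ)
    (h : ∀ i : Fin 5,
      eval a (pderiv i ((X 4 : MvPolynomial (Fin 5) ℂ) * (X 1 ^ 4 + X 2 ^ 4)
        + X 0 * X 3)) = 0) :
    ((a 0 = 0 ∧ a 1 = 0 ∧ a 2 = 0 ∧ a 3 = 0) ∨ (a 3 = 0 ∧ a 4 = 0)) ∧
      eval a ((X 4 : MvPolynomial (Fin 5) ℂ) * (X 1 ^ 4 + X 2 ^ 4) + X 0 * X 3) = 0 := by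
  have hsum : ∑ j ∈ ({1, 2} : Finset (Fin 5)), (X j : MvPolynomial (Fin 5) ℂ) ^ 4 =
      X 1 ^ 4 + X 2 ^ 4 := Finset.sum_pair (by decide)
  simpa [hsum, and_assoc] using singular_locus_of_section_general (n := 4) (t := {1, 2}) (a := a)
    (u := 0) (v := 3) (y := 4) (by norm_num) (by decide) (by decide) (by decide) (by decide)
    (by decide) (by decide) (by rwa [hsum])
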